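/- Fix an integer q ≥ 2 and define the formal power series H ∈ ℚ[[z]] by H = Σ_{k≥0} h_k z^k with h_k = q^k·((q-1)k+1)^{k-1}/k! (so h_0 = 1). Then H satisfies the Pólya-type equation H = exp(F), where F = q·z·H^{q-1} is a formal power series with zero constant term and exp(F) = Σ_{n≥0} F^n/n!. -/

import Mathlib

open PowerSeries

/-- The formal exponential `exp F = ∑_{n≥0} Fⁿ/n!` of a formal power series `F ∈ ℚ[[z]]`
with zero constant term, given coefficient-wise: since `F` has zero constant term,
only the terms with `m ≤ n` contribute to the `n`-th coefficient. -/
noncomputable def expPS (F : PowerSeries ℚ) : PowerSeries ℚ :=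
  PowerSeries.mk fun n =>
    ∑ m ∈ Finset.range (n + 1), (PowerSeries.coeff n (F ^ m)) / (Nat.factorial m : ℚ)

noncomputable def abelP (c p : ℚ) : ℕ → Polynomial ℚ
  | 0 => 1
  | (k + 1) => Polynomial.C (c ^ (k + 1) / ((k + 1).factorial : ℚ)) * Polynomial.X *
      (Polynomial.X + Polynomial.C (p * (k + 1))) ^ k

lemma abelP_deriv (c p : ℚ) (k : ℕ) : Polynomial.derivative (abelP c p (k + 1)) =
    Polynomial.C c * (abelP c p k).comp (Polynomial.X + Polynomial.C p) := by
  apply Polynomial.funext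
  intro x
  cases k with
  | zero => simp [abelP]
  | succ k =>
    have h1 : ((k : ℚ) + 1 + 1) ≠ 0 := by positivity
    have h2 : ((k + 1).factorial : ℚ) ≠ 0 := by positivity
    simp only [abelP, Polynomial.derivative_mul, Polynomial.derivative_C, Polynomial.derivative_X,
      Polynomial.derivative_pow, Polynomial.derivative_add, Polynomial.eval_add,
      Polynomial.eval_mul, Polynomial.eval_pow, Polynomial.eval_C, Polynomial.eval_X,
      Polynomial.eval_comp, Polynomial.eval_zero, Polynomial.eval_one]
    rw [Nat.factorial_succ (k + 1)]
    push_cast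
    have e : x + p + p * ((k : ℚ) + 1) = x + p * (k + 1 + 1) := by ring
    rw [e]
    field_simp
    ring

lemma abelP_zero (c p : ℚ) (k : ℕ) : (abelP c p (k + 1)).eval 0 = 0 := by
  simp [abelP]

lemma poly_eq (f g : Polynomial ℚ) (h : Polynomial.derivative f = Polynomial.derivative g)
    (h0 : f.eval 0 = g.eval 0) : f = g := by
  have h1 : Polynomial.derivative (f - g) = 0 := by simp [h]
  have h2 := Polynomial.derivative_eq_zero.mp h1
  obtain ⟨a, ha⟩ := Polynomial.natDegree_eq_zero.mp h2
  have h3 : (f - g).eval 0 = 0 := by simp [h0]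
  rw [← ha] at h3
  simp at h3
  rw [h3] at ha
  simp at ha
  exact sub_eq_zero.mp ha.symm

lemma abelP_add (c p y : ℚ) (n : ℕ) :
    ∑ ij ∈ Finset.HasAntidiagonal.antidiagonal n, abelP c p ij.1 * Polynomial.C ((abelP c p ij.2).eval y) =
      (abelP c p n).comp (Polynomial.X + Polynomial.C y) := by
  induction n with
  | zero => simp [abelP]
  | succ n ih =>
    apply poly_eq
    · rw [Finset.Nat.sum_antidiagonal_succ, Polynomial.derivative_add, Polynomial.derivative_sum,
        Polynomial.derivative_comp, abelP_deriv]
      simp only [Polynomial.derivative_mul, abelP_deriv, Polynomial.derivative_C]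
      have := congrArg (fun f => Polynomial.C c * f.comp (Polynomial.X + Polynomial.C p)) ih
      simp only [Polynomial.sum_comp, Finset.mul_sum, Polynomial.mul_comp,
        Polynomial.C_comp, Polynomial.comp_assoc] at this
      simp only [mul_zero, add_zero, mul_assoc, Polynomial.mul_comp, Polynomial.C_comp,
        Polynomial.comp_assoc]
      rw [this]
      simp [abelP, add_right_comm, add_comm, add_left_comm]
    · rw [Finset.Nat.sum_antidiagonal_succ]
      simp [Polynomial.eval_finsetSum, abelP_zero]
      simp [abelP]

noncomputable def abelS (c p x : ℚ) : PowerSeries ℚ :=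
  PowerSeries.mk fun k => (abelP c p k).eval x

lemma abelS_add (c p x y : ℚ) : abelS c p x * abelS c p y = abelS c p (x + y) := by
  ext n
  have := congrArg (Polynomial.eval x) (abelP_add c p y n)
  simp [Polynomial.eval_finsetSum] at this
  simp [abelS, PowerSeries.coeff_mul, this]

lemma abelS_pow (c p : ℚ) (m : ℕ) : abelS c p 1 ^ m = abelS c p m := by
  induction m with
  | zero =>
    ext n
    cases n <;> simp [abelS, abelP, PowerSeries.coeff_one]
  | succ m ih => rw [pow_succ, ih, abelS_add]; push_cast; rfl

/-- For `q ≥ 2`, the power series `H = ∑ h_k z^k` with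
`h_k = q^k ((q-1)k+1)^(k-1)/k!` satisfies the Pólya-type equation `H = exp(q·z·H^(q-1))`,
where `F = q·z·H^(q-1)` has zero constant term. -/
theorem stmt_3 (q : ℕ) (hq : 2 ≤ q)
    (H : PowerSeries ℚ)
    (hH : H = PowerSeries.mk fun k =>
      (q : ℚ) ^ k * (((q - 1) * k + 1 : ℕ) : ℚ) ^ (k - 1) / (Nat.factorial k : ℚ)) :
    PowerSeries.constantCoeff ((q : PowerSeries ℚ) * PowerSeries.X * H ^ (q - 1)) = 0
      ∧ H = expPS ((q : PowerSeries ℚ) * PowerSeries.X * H ^ (q - 1)) := by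
  refine ⟨by simp, ?_⟩
  obtain ⟨p, rfl⟩ : ∃ p, q = p + 1 := ⟨q - 1, by omega⟩
  simp only [Nat.add_sub_cancel] at hH ⊢
  generalize hc : p + 1 = c at *
  have hA : H = abelS c p 1 := by
    rw [hH]
    ext k
    cases k with
    | zero => simp [abelS, abelP]
    | succ k =>
      simp [abelS, abelP]
      ring
  have key : ∀ n m : ℕ, PowerSeries.coeff (n + m) (((c : PowerSeries ℚ) * PowerSeries.X * H ^ p) ^ m)
      = (c : ℚ) ^ m * (abelP c p n).eval ((p : ℚ) * m) := by
    intro n m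
    have : ((c : PowerSeries ℚ) * PowerSeries.X * H ^ p) ^ m
        = PowerSeries.C ((c : ℚ) ^ m) * (abelS c p ((p * m : ℕ) : ℚ) * PowerSeries.X ^ m) := by
      rw [← abelS_pow, hA, pow_mul]
      simp
      ring
    rw [this, PowerSeries.coeff_C_mul, PowerSeries.coeff_mul_X_pow]
    simp [abelS]
  ext n
  cases n with
  | zero => simp [hH, expPS]
  | succ n =>
    rw [expPS, PowerSeries.coeff_mk, Finset.sum_range_succ', pow_zero, PowerSeries.coeff_one]
    simp only [Nat.add_eq_zero_iff, one_ne_zero, and_false, if_false, zero_div, add_zero]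
    rw [hH, PowerSeries.coeff_mk, ← hH]
    have hb : (((p * (n + 1) + 1 : ℕ) : ℚ)) ^ n = ∑ m ∈ Finset.range (n + 1),
        ((p : ℚ) * (n + 1)) ^ (n - m) * (n.choose m) := by
      push_cast
      rw [add_comm, add_pow]
      simp
    rw [Nat.add_sub_cancel, hb, Finset.mul_sum, Finset.sum_div]
    apply Finset.sum_congr rfl
    intro m hm
    obtain ⟨j, rfl⟩ : ∃ j, n = j + m := ⟨n - m, by simp at hm; omega⟩
    rw [show j + m + 1 = j + (m + 1) by ring, key]
    cases j with
    | zero => simp [abelP]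
    | succ j =>
      have hch := Nat.add_choose_mul_factorial_mul_factorial (j + 1) m
      have hch' : (((j + 1 + m).choose m : ℕ) : ℚ) =
          ((j + 1 + m).factorial : ℚ) / ((j + 1).factorial * m.factorial) := by
        rw [eq_div_iff (by positivity), ← hch]
        push_cast
        ring
      rw [hch', show j + 1 + (m + 1) = (j + 1 + m) + 1 by ring, Nat.factorial_succ (j + 1 + m),
        Nat.factorial_succ m]
      simp only [abelP, Polynomial.eval_mul, Polynomial.eval_pow, Polynomial.eval_C,
        Polynomial.eval_X, Polynomial.eval_add, Nat.add_sub_cancel]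
      push_cast
      have e : (p : ℚ) * (m + 1) + p * (j + 1) = p * (j + 1 + m + 1) := by ring
      rw [e]
      have h1 : ((j : ℚ) + 1 + m + 1) ≠ 0 := by positivity
      have h2 : ((m : ℚ) + 1) ≠ 0 := by positivity
      have h3 : ((j + 1 + m).factorial : ℚ) ≠ 0 := by positivity
      have h4 : ((j + 1).factorial : ℚ) ≠ 0 := by positivity
      have h5 : (m.factorial : ℚ) ≠ 0 := by positivity
      field_simp
      ring
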